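/- Let d be a rational prime and let m ≥ 2, n ≥ 1 be integers. If the reduction G̅_{d,0,n}(c) ∈ 𝔽_d[c] of G_{d,0,n}(c) modulo d is irreducible over 𝔽_d, then G_{d,m,n}(c) is irreducible over ℚ. -/

import Mathlib

open Polynomial

noncomputable section

/-- `critPoly d i` is `f_{c,d}^i(0)` as a polynomial in the variable `c` over `ℤ`,
where `f_{c,d}(x) = x^d + c`. -/
def critPoly (d : ℕ) : ℕ → Polynomial ℤ
  | 0 => 0
  | i + 1 => critPoly d i ^ d + X

/-- The field of rational functions in `c` over `ℚ`, realized as the fraction field of `ℤ[c]`. -/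
abbrev RF : Type := FractionRing (Polynomial ℤ)

/-- The natural inclusion `ℤ[c] → ℚ(c)`. -/
def toRF (p : Polynomial ℤ) : RF := algebraMap (Polynomial ℤ) RF p

/-- `G_{d,0,n} = ∏_{k ∣ n} (f_{c,d}^k(0))^{μ(n/k)}` as a rational function. -/
def G0Rat (d n : ℕ) : RF :=
  ∏ k ∈ n.divisors, toRF (critPoly d k) ^ (ArithmeticFunction.moebius (n / k))

/-- `F_{d,m,n}` as a rational function. -/
def FRat (d m n : ℕ) : RF :=
  ∏ k ∈ n.divisors,
    ((toRF (critPoly d (m + k)) - toRF (critPoly d m)) /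
      (toRF (critPoly d (m - 1 + k)) - toRF (critPoly d (m - 1)))) ^
      (ArithmeticFunction.moebius (n / k))

/-- `G_{d,m,n}` (for `m ≥ 2`) as a rational function. -/
def GRat (d m n : ℕ) : RF :=
  if n ∣ m - 1 then FRat d m n / FRat d 1 n else FRat d m n

/-- `G : ℤ[c]` is the Misiurewicz polynomial `G_{d,m,n}` (for `m ≥ 2`). -/
def IsMisiurewicz (d m n : ℕ) (G : Polynomial ℤ) : Prop := toRF G = GRat d m n

/-- `G0 : ℤ[c]` is the polynomial `G_{d,0,n}`. -/
def IsG0 (d n : ℕ) (G0 : Polynomial ℤ) : Prop := toRF G0 = G0Rat d n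

/-!
Write `a_k` for `critPoly d k`. Let `R` be `ℤ[X]` modulo `(d ^ 2, G₀)`, which has residue field
`𝔽_d[X] / (G₀)`. In that residue field the critical point `0` has exact period `n`, so `a_k` is a
unit of `R` for `n ∤ k`, whereas `a_n = 0` in `R`, being associated to `G₀` there. In the product
over `k ∣ n` defining `G` the factors with `k ≠ n` are therefore units of `R`, and the factor with
`k = n` is of the form `(x ^ d - y ^ d) / (x - y)` with `x = y` a unit of `R`, that is `d` times a
unit; so `G ≠ 0` in `R`. On the other hand `(x ^ d - y ^ d) / (x - y) = (x - y) ^ (d - 1)` in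
characteristic `d`, which makes `G` congruent to a power of `G₀` modulo `d`. These two facts are the
hypotheses of the generalized Eisenstein criterion.
-/

section ZpowProducts

variable {ι R K : Type*} [CommRing R] [Field K] {f : R →+* K} {s : Finset ι} {u : ι → R}
  {e : ι → ℤ} {p q : R}

lemma mul_prod_pow_toNat_neg_eq (hf : Function.Injective f) (hu : ∀ i ∈ s, u i ≠ 0)
    (h : f q = f p * ∏ i ∈ s, f (u i) ^ e i) :
    q * ∏ i ∈ s, u i ^ (-e i).toNat = p * ∏ i ∈ s, u i ^ (e i).toNat := by
  apply hf
  simp only [map_mul, map_prod, map_pow, h, mul_assoc, ← Finset.prod_mul_distrib]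
  refine congrArg (f p * ·) (Finset.prod_congr rfl fun i hi => ?_)
  have hfu : f (u i) ≠ 0 := (map_ne_zero_iff f hf).2 (hu i hi)
  rw [← zpow_natCast, ← zpow_natCast, ← zpow_add₀ hfu]
  congr 1
  omega

lemma associated_map_of_eq_mul_prod_zpow {S : Type*} [CommRing S] (φ : R →+* S)
    (hf : Function.Injective f) (hu : ∀ i ∈ s, IsUnit (φ (u i)))
    (h : f q = f p * ∏ i ∈ s, f (u i) ^ e i) : Associated (φ q) (φ p) := by
  rcases subsingleton_or_nontrivial S with _ | _
  · exact Subsingleton.elim (φ p) (φ q) ▸ Associated.refl _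
  have hprod (c : ι → ℕ) : IsUnit (φ (∏ i ∈ s, u i ^ c i)) := by
    rw [map_prod]
    exact IsUnit.prod_iff.2 fun i hi => map_pow φ (u i) (c i) ▸ (hu i hi).pow _
  have key := congrArg φ <| mul_prod_pow_toNat_neg_eq hf
    (fun i hi h0 => (hu i hi).ne_zero (by rw [h0, map_zero])) h
  rw [map_mul, map_mul] at key
  calc Associated (φ q) (φ q * _) := associated_mul_unit_right _ _ (hprod _)
    _ = _ := key
    Associated _ (φ p) := associated_mul_unit_left _ _ (hprod _)

lemma monic_of_eq_prod_zpow {A : Type*} [CommRing A] {f : A[X] →+* K} {u : ι → A[X]} {q : A[X]}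
    (hf : Function.Injective f) (hu : ∀ i ∈ s, (u i).Monic)
    (h : f q = ∏ i ∈ s, f (u i) ^ e i) : q.Monic := by
  have := Polynomial.nontrivial_iff.1 f.domain_nontrivial
  have hprod (c : ι → ℕ) : (∏ i ∈ s, u i ^ c i).Monic :=
    monic_prod_of_monic _ _ fun i hi => (hu i hi).pow _
  have key := mul_prod_pow_toNat_neg_eq (p := 1) hf (fun i hi => (hu i hi).ne_zero)
    (by simpa using h)
  refine (hprod fun i => (-e i).toNat).of_mul_monic_left ?_
  rw [mul_comm, key, one_mul]
  exact hprod _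

lemma map_eq_pow_of_eq_prod_zpow {S : Type*} [CommRing S] [IsDomain S] (φ : R →+* S)
    {v : ι → R} {N : ℕ} (hf : Function.Injective f) (hv : ∀ i ∈ s, φ (v i) ≠ 0)
    (huv : ∀ i ∈ s, φ (u i) = φ (v i) ^ N) (hq : f q = ∏ i ∈ s, f (u i) ^ e i)
    (hp : f p = ∏ i ∈ s, f (v i) ^ e i) : φ q = φ p ^ N := by
  have hu : ∀ i ∈ s, u i ≠ 0 := fun i hi h0 =>
    pow_ne_zero N (hv i hi) (by rw [← huv i hi, h0, map_zero])
  have hv' : ∀ i ∈ s, v i ≠ 0 := fun i hi h0 => hv i hi (by rw [h0, map_zero])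
  have hpow (c : ι → ℕ) : φ (∏ i ∈ s, u i ^ c i) = φ (∏ i ∈ s, v i ^ c i) ^ N := by
    simp only [map_prod, map_pow, ← Finset.prod_pow]
    exact Finset.prod_congr rfl fun i hi => by rw [huv i hi, pow_right_comm]
  have hq' := congrArg φ <| mul_prod_pow_toNat_neg_eq (p := 1) hf hu (by simpa using hq)
  have hp' := congrArg φ <| mul_prod_pow_toNat_neg_eq (p := 1) hf hv' (by simpa using hp)
  rw [one_mul, map_mul, hpow, hpow] at hq'
  rw [one_mul, map_mul] at hp'
  rw [← hp', mul_pow] at hq'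
  refine mul_right_cancel₀ (pow_ne_zero N ?_) hq'
  rw [map_prod]
  exact Finset.prod_ne_zero_iff.2 fun i hi => map_pow φ (v i) _ ▸ pow_ne_zero _ (hv i hi)

end ZpowProducts

section Moebius

lemma prod_divisors_ite_dvd_zpow_moebius {K : Type*} [CommGroupWithZero K] {x : K} (hx : x ≠ 0)
    (r : ℕ) {n : ℕ} (hn : n ≠ 0) :
    ∏ k ∈ n.divisors, (if r ∣ k then x else 1) ^ ArithmeticFunction.moebius (n / k) =
      if n = r then x else 1 := by
  rw [← Nat.prod_divisorsAntidiagonal'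
    (fun a b => (if r ∣ b then x else 1) ^ ArithmeticFunction.moebius a)]
  refine (ArithmeticFunction.prod_eq_iff_prod_pow_moebius_eq_of_nonzero
    (f := fun i => if i = r then x else 1) (g := fun i => if r ∣ i then x else 1)
    (fun i _ => ?_) (fun i _ => ?_)).1 (fun i hi => ?_) n (Nat.pos_of_ne_zero hn)
  · split_ifs <;> simp [hx]
  · split_ifs <;> simp [hx]
  · simp [Finset.prod_ite_eq', hi.ne']

lemma toRF_one : toRF 1 = 1 := map_one (algebraMap ℤ[X] RF)

lemma toRF_mul (p q : ℤ[X]) : toRF (p * q) = toRF p * toRF q := map_mul (algebraMap ℤ[X] RF) p q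

lemma toRF_sub (p q : ℤ[X]) : toRF (p - q) = toRF p - toRF q := map_sub (algebraMap ℤ[X] RF) p q

lemma toRF_ne_zero {p : ℤ[X]} (hp : p ≠ 0) : toRF p ≠ 0 :=
  (map_ne_zero_iff _ (IsFractionRing.injective ℤ[X] RF)).2 hp

lemma associated_map_of_eq_prod_zpow_moebius {S : Type*} [CommRing S] (φ : ℤ[X] →+* S) {n : ℕ}
    (hn : n ≠ 0) {q : ℤ[X]} {u : ℕ → ℤ[X]} (hu : ∀ k ∈ n.properDivisors, IsUnit (φ (u k)))
    (h : toRF q = ∏ k ∈ n.divisors, toRF (u k) ^ ArithmeticFunction.moebius (n / k)) :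
    Associated (φ q) (φ (u n)) := by
  rw [← Nat.cons_self_properDivisors hn, Finset.prod_cons, Nat.div_self (Nat.pos_of_ne_zero hn),
    ArithmeticFunction.moebius_apply_one, zpow_one] at h
  exact associated_map_of_eq_mul_prod_zpow φ (IsFractionRing.injective ℤ[X] RF) hu h

end Moebius

section GeomSum

/-- The homogeneous geometric sum `(x ^ d - y ^ d) / (x - y)`, as a polynomial expression so that
it also makes sense for `x = y`. -/
def geomSum₂ {R : Type*} [CommRing R] (d : ℕ) (x y : R) : R :=
  ∑ i ∈ Finset.range d, x ^ i * y ^ (d - 1 - i)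

variable {R : Type*} [CommRing R] (d : ℕ)

lemma geomSum₂_mul_sub (x y : R) : geomSum₂ d x y * (x - y) = x ^ d - y ^ d :=
  geom_sum₂_mul x y d

lemma geomSum₂_self (x : R) : geomSum₂ d x x = d * x ^ (d - 1) :=
  geom_sum₂_self x d

lemma map_geomSum₂ {S : Type*} [CommRing S] (φ : R →+* S) (x y : R) :
    φ (geomSum₂ d x y) = geomSum₂ d (φ x) (φ y) :=
  RingHom.map_geom_sum₂ x y d φ

lemma geomSum₂_mul_mul (a x y : R) :
    geomSum₂ d (a * x) (a * y) = a ^ (d - 1) * geomSum₂ d x y := by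
  rw [geomSum₂, geomSum₂, Finset.mul_sum]
  refine Finset.sum_congr rfl fun i hi => ?_
  have hexp : d - 1 = i + (d - 1 - i) := by have := Finset.mem_range.1 hi; omega
  rw [mul_pow, mul_pow, show a ^ (d - 1) = a ^ i * a ^ (d - 1 - i) by rw [← pow_add, ← hexp]]
  ring

lemma geomSum₂_zero_right {d : ℕ} (hd : d ≠ 0) (x : R) : geomSum₂ d x 0 = x ^ (d - 1) := by
  obtain ⟨e, rfl⟩ := Nat.exists_eq_succ_of_ne_zero hd
  rw [geomSum₂, Finset.sum_range_succ, Finset.sum_eq_zero]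
  · simp
  · intro i hi
    have : e - i ≠ 0 := by have := Finset.mem_range.1 hi; omega
    simp [this]

lemma geomSum₂_eq_sub_pow [IsDomain R] [hd : Fact d.Prime] [CharP R d] (x y : R) :
    geomSum₂ d x y = (x - y) ^ (d - 1) := by
  rcases eq_or_ne x y with rfl | hxy
  · simp [geomSum₂_self, Nat.sub_ne_zero_of_lt hd.out.one_lt]
  · apply mul_right_cancel₀ (sub_ne_zero.2 hxy)
    rw [geomSum₂_mul_sub, ← pow_succ, Nat.sub_add_cancel hd.out.one_le, sub_pow_char]

end GeomSum

section CriticalOrbit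

lemma critPoly_zero (d : ℕ) : critPoly d 0 = 0 := rfl

lemma critPoly_succ (d k : ℕ) : critPoly d (k + 1) = critPoly d k ^ d + X := rfl

lemma map_critPoly {S : Type*} [CommRing S] (φ : ℤ[X] →+* S) (d k : ℕ) :
    φ (critPoly d k) = (fun x => x ^ d + φ X)^[k] 0 := by
  induction k with
  | zero => simp [critPoly_zero]
  | succ k ih => rw [critPoly_succ, Function.iterate_succ_apply', ← ih, map_add, map_pow]

lemma map_critPoly_eq_zero_iff_minimalPeriod_dvd {S : Type*} [CommRing S] (φ : ℤ[X] →+* S)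
    (d k : ℕ) :
    φ (critPoly d k) = 0 ↔ Function.minimalPeriod (fun x => x ^ d + φ X) 0 ∣ k := by
  rw [map_critPoly, ← Function.isPeriodicPt_iff_minimalPeriod_dvd]
  rfl

lemma map_critPoly_add_of_eq_zero {S : Type*} [CommRing S] (φ : ℤ[X] →+* S) {d k : ℕ}
    (h : φ (critPoly d k) = 0) (l : ℕ) : φ (critPoly d (l + k)) = φ (critPoly d l) := by
  rw [map_critPoly, Function.iterate_add_apply, ← map_critPoly, h, ← map_critPoly]

lemma critPoly_sub_succ (d i j : ℕ) :
    critPoly d (i + 1) - critPoly d (j + 1) =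
      geomSum₂ d (critPoly d i) (critPoly d j) * (critPoly d i - critPoly d j) := by
  rw [geomSum₂_mul_sub, critPoly_succ, critPoly_succ, add_sub_add_right_eq_sub]

lemma map_critPoly_add_sub {S : Type*} [CommRing S] (φ : ℤ[X] →+* S) (d : ℕ) [Fact d.Prime]
    [CharP S d] (l k : ℕ) :
    φ (critPoly d (l + k)) - φ (critPoly d l) = φ (critPoly d k) ^ d ^ l := by
  induction l with
  | zero => simp [critPoly_zero]
  | succ l ih =>
    rw [add_right_comm, critPoly_succ, critPoly_succ, pow_succ, pow_mul, ← ih, sub_pow_char]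
    simp

variable {d : ℕ}

lemma critPoly_succ_monic_natDegree (hd : 2 ≤ d) (k : ℕ) :
    (critPoly d (k + 1)).Monic ∧ (critPoly d (k + 1)).natDegree = d ^ k := by
  induction k with
  | zero =>
    rw [critPoly_succ, critPoly_zero, zero_pow (by omega), zero_add]
    exact ⟨monic_X, natDegree_X⟩
  | succ k ih =>
    obtain ⟨hmonic, hdeg⟩ := ih
    have hdeg' : (critPoly d (k + 1) ^ d).natDegree = d ^ (k + 1) := by
      rw [hmonic.natDegree_pow, hdeg, pow_succ']
    have hlt : (X : ℤ[X]).natDegree < (critPoly d (k + 1) ^ d).natDegree := by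
      rw [hdeg', natDegree_X]
      exact Nat.one_lt_pow (by omega) (by omega)
    rw [critPoly_succ]
    exact ⟨(hmonic.pow d).add_of_left (degree_lt_degree hlt),
      (natDegree_add_eq_left_of_natDegree_lt hlt).trans hdeg'⟩

lemma critPoly_monic (hd : 2 ≤ d) {k : ℕ} (hk : k ≠ 0) : (critPoly d k).Monic := by
  obtain ⟨k, rfl⟩ := Nat.exists_eq_succ_of_ne_zero hk
  exact (critPoly_succ_monic_natDegree hd k).1

lemma critPoly_add_sub_monic (hd : 2 ≤ d) (l : ℕ) {k : ℕ} (hk : k ≠ 0) :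
    (critPoly d (l + k) - critPoly d l).Monic := by
  obtain ⟨k, rfl⟩ := Nat.exists_eq_succ_of_ne_zero hk
  refine (critPoly_monic hd (by omega)).sub_of_left (degree_lt_degree ?_)
  rw [Nat.add_succ, (critPoly_succ_monic_natDegree hd _).2]
  cases l with
  | zero => simpa [critPoly_zero] using Nat.pow_pos (by omega)
  | succ l =>
    rw [(critPoly_succ_monic_natDegree hd _).2]
    exact Nat.pow_lt_pow_right (by omega) (by omega)

lemma geomSum₂_critPoly_monic (hd : 2 ≤ d) (l : ℕ) {k : ℕ} (hk : k ≠ 0) :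
    (geomSum₂ d (critPoly d (l + k)) (critPoly d l)).Monic := by
  refine (critPoly_add_sub_monic hd l hk).of_mul_monic_left ?_
  rw [mul_comm, ← critPoly_sub_succ, add_right_comm]
  exact critPoly_add_sub_monic hd (l + 1) hk

-- Since `f` has zero derivative at `0`, modulo `critPoly d k ^ 2` the point `f^k(0)` is fixed by
-- `f^k`.
lemma critPoly_sq_dvd_sub (hd : 2 ≤ d) {k : ℕ} (hk : k ≠ 0) (j : ℕ) :
    critPoly d k ^ 2 ∣ critPoly d (k * (j + 1)) - critPoly d k := by
  rw [← Ideal.mem_span_singleton, ← Ideal.Quotient.eq]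
  set φ := Ideal.Quotient.mk (Ideal.span {critPoly d k ^ 2})
  obtain ⟨k, rfl⟩ := Nat.exists_eq_succ_of_ne_zero hk
  have hpow : φ (critPoly d (k + 1)) ^ d = 0 := by
    rw [← map_pow, Ideal.Quotient.eq_zero_iff_mem, Ideal.mem_span_singleton]
    exact pow_dvd_pow _ hd
  have hfix : Function.IsFixedPt (fun x => x ^ d + φ X)^[k + 1] (φ (critPoly d (k + 1))) := by
    rw [Function.IsFixedPt, Function.iterate_succ_apply, hpow, map_critPoly,
      Function.iterate_succ_apply, zero_pow (by omega)]
  rw [map_critPoly, mul_add_one, Function.iterate_add_apply, Function.iterate_mul, ← map_critPoly]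
  exact hfix.iterate j

lemma critPoly_dvd_critPoly (d : ℕ) {k l : ℕ} (hkl : k ∣ l) : critPoly d k ∣ critPoly d l := by
  rw [← Ideal.mem_span_singleton, ← Ideal.Quotient.eq_zero_iff_mem,
    map_critPoly_eq_zero_iff_minimalPeriod_dvd]
  refine dvd_trans ?_ hkl
  rw [← map_critPoly_eq_zero_iff_minimalPeriod_dvd, Ideal.Quotient.eq_zero_iff_mem]
  exact Ideal.mem_span_singleton_self _

lemma critPoly_mul_divByMonic (hd : 2 ≤ d) {k l : ℕ} (hk : k ≠ 0) (hkl : k ∣ l) :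
    critPoly d k * (critPoly d l /ₘ critPoly d k) = critPoly d l := by
  have hmod := (modByMonic_eq_zero_iff_dvd (critPoly_monic hd hk)).2 (critPoly_dvd_critPoly d hkl)
  simpa [hmod] using modByMonic_add_div (critPoly d l) (critPoly d k)

lemma critPoly_dvd_divByMonic_sub_one (hd : 2 ≤ d) {k l : ℕ} (hl : l ≠ 0) (hkl : k ∣ l) :
    critPoly d k ∣ critPoly d l /ₘ critPoly d k - 1 := by
  have hk : k ≠ 0 := ne_zero_of_dvd_ne_zero hl hkl
  have hmul := critPoly_mul_divByMonic hd hk hkl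
  obtain ⟨j, rfl⟩ := hkl
  obtain ⟨j, rfl⟩ := Nat.exists_eq_succ_of_ne_zero (right_ne_zero_of_mul hl)
  apply (mul_dvd_mul_iff_left (critPoly_monic hd hk).ne_zero).1
  rw [mul_sub_one, hmul, ← sq]
  exact critPoly_sq_dvd_sub hd hk j

lemma map_divByMonic_critPoly_eq_one (hd : 2 ≤ d) {k l : ℕ} (hl : l ≠ 0) (hkl : k ∣ l) {S : Type*}
    [CommRing S] (φ : ℤ[X] →+* S) (h : φ (critPoly d k) = 0) :
    φ (critPoly d l /ₘ critPoly d k) = 1 := by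
  have hdvd := map_dvd φ (critPoly_dvd_divByMonic_sub_one hd hl hkl)
  rwa [h, zero_dvd_iff, map_sub, map_one, sub_eq_zero] at hdvd

end CriticalOrbit

section Gleason

variable {d n : ℕ} {G₀ : ℤ[X]}

lemma IsG0.monic (hG₀ : IsG0 d n G₀) (hd : 2 ≤ d) : G₀.Monic :=
  monic_of_eq_prod_zpow (IsFractionRing.injective ℤ[X] RF)
    (fun _ hk => critPoly_monic hd (Nat.pos_of_mem_divisors hk).ne') hG₀

lemma IsG0.exists_dvd_map_critPoly_eq_zero (hG₀ : IsG0 d n G₀) {L : Type*} [Field L]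
    (φ : ℤ[X] →+* L) (h : φ G₀ = 0) : ∃ k ∈ n.divisors, φ (critPoly d k) = 0 := by
  by_contra! hne
  have hprod : toRF G₀ = toRF 1 *
      ∏ k ∈ n.divisors, toRF (critPoly d k) ^ ArithmeticFunction.moebius (n / k) := by
    rw [toRF_one, one_mul]
    exact hG₀
  have hassoc := associated_map_of_eq_mul_prod_zpow φ (IsFractionRing.injective ℤ[X] RF)
    (fun k hk => (hne k hk).isUnit) hprod
  rw [h, map_one, Associated.comm, associated_zero_iff_eq_zero] at hassoc
  exact one_ne_zero hassoc

-- Writing `critPoly d k = critPoly d r * w k` for `r ∣ k`, the exponents `μ (n / k)` of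
-- `critPoly d r` add up to `1` if `n = r` and to `0` otherwise.
lemma IsG0.eq_mul_prod_zpow_moebius (hG₀ : IsG0 d n G₀) (hd : 2 ≤ d) (hn : n ≠ 0) {r : ℕ}
    (hr : r ≠ 0) :
    toRF G₀ = toRF (if n = r then critPoly d r else 1) * ∏ k ∈ n.divisors,
      toRF (if r ∣ k then critPoly d k /ₘ critPoly d r else critPoly d k) ^
        ArithmeticFunction.moebius (n / k) := by
  have hite (P : Prop) [Decidable P] : toRF (if P then critPoly d r else 1) =
      if P then toRF (critPoly d r) else 1 := by
    rw [apply_ite toRF, toRF_one]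
  rw [hite, ← prod_divisors_ite_dvd_zpow_moebius (toRF_ne_zero (critPoly_monic hd hr).ne_zero) r hn,
    ← Finset.prod_mul_distrib, hG₀, G0Rat]
  refine Finset.prod_congr rfl fun k _ => ?_
  rw [← mul_zpow, ← hite, ← toRF_mul]
  split_ifs with hrk
  · rw [critPoly_mul_divByMonic hd hr hrk]
  · rw [one_mul]

lemma IsG0.map_critPoly_eq_zero_iff (hG₀ : IsG0 d n G₀) (hd : 2 ≤ d) {L : Type*} [Field L]
    (φ : ℤ[X] →+* L) (h : φ G₀ = 0) (j : ℕ) : φ (critPoly d j) = 0 ↔ n ∣ j := by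
  set r := Function.minimalPeriod (fun x => x ^ d + φ X) 0
  have hr : ∀ k, φ (critPoly d k) = 0 ↔ r ∣ k := map_critPoly_eq_zero_iff_minimalPeriod_dvd φ d
  suffices n = r by rw [hr, this]
  obtain ⟨k₀, hk₀, hφk₀⟩ := hG₀.exists_dvd_map_critPoly_eq_zero φ h
  have hr0 : r ≠ 0 := ne_zero_of_dvd_ne_zero (Nat.pos_of_mem_divisors hk₀).ne' ((hr k₀).1 hφk₀)
  have hunit : ∀ k ∈ n.divisors,
      IsUnit (φ (if r ∣ k then critPoly d k /ₘ critPoly d r else critPoly d k)) := by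
    intro k hk
    split_ifs with hrk
    · rw [map_divByMonic_critPoly_eq_one hd (Nat.pos_of_mem_divisors hk).ne' hrk φ
        ((hr r).2 dvd_rfl)]
      exact isUnit_one
    · exact Ne.isUnit ((hr k).not.2 hrk)
  by_contra hne
  have hassoc := associated_map_of_eq_mul_prod_zpow φ (IsFractionRing.injective ℤ[X] RF) hunit
    (hG₀.eq_mul_prod_zpow_moebius hd (Nat.mem_divisors.1 hk₀).2 hr0)
  rw [h, if_neg hne, map_one, Associated.comm, associated_zero_iff_eq_zero] at hassoc
  exact one_ne_zero hassoc

end Gleason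

section Eisenstein

variable {R A K : Type*} [CommRing R] [CommRing A] [Field K]

/-- Reduction of polynomials through `ρ : R →+* A` and then modulo `q`; for an ideal `I` of `R`
and `A = R ⧸ I` this is the quotient map `R[X] → R[X] ⧸ (I, q)`. -/
def residue (ρ : R →+* A) (q : R[X]) : R[X] →+* AdjoinRoot (q.map ρ) :=
  (AdjoinRoot.mk (q.map ρ)).comp (mapRingHom ρ)

lemma residue_eq_zero_iff (ρ : R →+* A) (q s : R[X]) :
    residue ρ q s = 0 ↔ q.map ρ ∣ s.map ρ :=
  AdjoinRoot.mk_eq_zero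

lemma residue_self (ρ : R →+* A) (q : R[X]) : residue ρ q q = 0 :=
  (residue_eq_zero_iff ρ q q).2 dvd_rfl

lemma residue_C_ne_zero {ρ : R →+* A} {q : R[X]} (hq : q.Monic) (hdeg : q.natDegree ≠ 0) {a : R}
    (ha : ρ a ≠ 0) : residue ρ q (C a) ≠ 0 := by
  have := nontrivial_of_ne _ _ ha
  rw [Ne, residue_eq_zero_iff, map_C]
  refine (hq.map ρ).not_dvd_of_natDegree_lt (C_ne_zero.2 ha) ?_
  rw [natDegree_C, hq.natDegree_map]
  exact Nat.pos_of_ne_zero hdeg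

lemma isUnit_residue_of_residue_ne_zero {κ : R →+* K} (hκ : Function.Surjective κ) {ρ : R →+* A}
    (hρ : RingHom.ker κ ^ 2 ≤ RingHom.ker ρ) {q s : R[X]} (hq : Irreducible (q.map κ))
    (hs : residue κ q s ≠ 0) : IsUnit (residue ρ q s) := by
  obtain ⟨a, b, hab⟩ := hq.coprime_iff_not_dvd.2 ((residue_eq_zero_iff κ q s).not.1 hs)
  obtain ⟨a, rfl⟩ := map_surjective κ hκ a
  obtain ⟨b, rfl⟩ := map_surjective κ hκ b
  set ε := a * q + b * s - 1 with hε
  have hε_ker : ε ∈ (RingHom.ker κ).map C := by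
    rw [← ker_mapRingHom, RingHom.mem_ker, coe_mapRingHom, hε]
    simp [hab]
  have hε_sq : residue ρ q ε ^ 2 = 0 := by
    have hmem : ε ^ 2 ∈ RingHom.ker (mapRingHom ρ) := by
      rw [ker_mapRingHom]
      refine Ideal.map_mono hρ ?_
      rw [Ideal.map_pow]
      exact Ideal.pow_mem_pow hε_ker 2
    rw [← map_pow, residue, RingHom.comp_apply, RingHom.mem_ker.1 hmem, map_zero]
  have hbs : residue ρ q b * residue ρ q s = residue ρ q ε + 1 := by
    rw [← map_mul, ← map_one (residue ρ q), ← map_add, hε, sub_add_cancel, map_add, map_mul,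
      map_mul, residue_self, mul_zero, zero_add]
  exact isUnit_of_mul_isUnit_right (hbs ▸ IsNilpotent.isUnit_add_one ⟨2, hε_sq⟩)

lemma irreducible_of_residue_ne_zero [IsDomain R] {κ : R →+* K} {ρ : R →+* A}
    (hρ : RingHom.ker κ ^ 2 ≤ RingHom.ker ρ) {f q : R[X]} {N : ℕ} (hf : f.Monic) (hq : q.Monic)
    (hq_irr : Irreducible (q.map κ)) (hN : N ≠ 0) (hfq : f.map κ = q.map κ ^ N)
    (hres : residue ρ q f ≠ 0) : Irreducible f := by
  let _ : Algebra R K := κ.toAlgebra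
  refine generalizedEisenstein (K := K) (p := N) hq_irr hq hf.isPrimitive ?_ ?_ ?_ ?_
  · rw [← hf.natDegree_map κ, hfq, natDegree_pow]
    exact Nat.mul_pos (Nat.pos_of_ne_zero hN) hq_irr.natDegree_pos
  · rw [hf.leadingCoeff, map_one]
    exact one_ne_zero
  · rw [hf.leadingCoeff, map_one, C_1, one_mul]
    exact hfq
  · contrapose! hres
    have hmem : f %ₘ q ∈ RingHom.ker (mapRingHom (Ideal.Quotient.mk (RingHom.ker κ ^ 2))) := hres
    rw [ker_mapRingHom, Ideal.mk_ker] at hmem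
    have hmod : f %ₘ q ∈ RingHom.ker (mapRingHom ρ) := by
      rw [ker_mapRingHom]
      exact Ideal.map_mono hρ hmem
    rw [← modByMonic_add_div f q, map_add, map_mul, residue_self, zero_mul, add_zero, residue,
      RingHom.comp_apply, RingHom.mem_ker.1 hmod, map_zero]

end Eisenstein

lemma ker_intCastRingHom_sq_le (d : ℕ) :
    RingHom.ker (Int.castRingHom (ZMod d)) ^ 2 ≤ RingHom.ker (Int.castRingHom (ZMod (d ^ 2))) := by
  rw [ZMod.ker_intCastRingHom, ZMod.ker_intCastRingHom, Ideal.span_singleton_pow, Nat.cast_pow]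

lemma residue_natCast_ne_zero {d : ℕ} (hd : 1 < d) {q : ℤ[X]} (hq : q.Monic)
    (hdeg : q.natDegree ≠ 0) :
    (d : AdjoinRoot (q.map (Int.castRingHom (ZMod (d ^ 2))))) ≠ 0 := by
  have hd_sq : Int.castRingHom (ZMod (d ^ 2)) d ≠ 0 := by
    rw [map_natCast, Ne, ZMod.natCast_eq_zero_iff]
    exact Nat.not_dvd_of_pos_of_lt (by omega) (lt_self_pow₀ hd one_lt_two)
  simpa using residue_C_ne_zero hq hdeg hd_sq

section Misiurewicz

lemma not_dvd_of_mem_properDivisors {n k : ℕ} (hk : k ∈ n.properDivisors) : ¬n ∣ k :=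
  Nat.not_dvd_of_pos_of_lt (Nat.pos_of_mem_properDivisors hk) (Nat.mem_properDivisors.1 hk).2

lemma FRat_succ_eq_prod {d : ℕ} (hd : 2 ≤ d) (l n : ℕ) :
    FRat d (l + 1) n = ∏ k ∈ n.divisors,
      toRF (geomSum₂ d (critPoly d (l + k)) (critPoly d l)) ^
        ArithmeticFunction.moebius (n / k) := by
  refine Finset.prod_congr rfl fun k hk => ?_
  have hne := toRF_ne_zero (critPoly_add_sub_monic hd l (Nat.pos_of_mem_divisors hk).ne').ne_zero
  rw [add_tsub_cancel_right, add_right_comm, ← toRF_sub, ← toRF_sub, critPoly_sub_succ, toRF_mul,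
    mul_div_cancel_right₀ _ hne]

/-- The quotient of `geomSum₂ d (critPoly d (l + k)) (critPoly d l)` by `critPoly d k ^ (d - 1)`,
which is the `k`-th factor of `FRat d (l + 1) n / FRat d 1 n`. It is meant for `k ∣ l`, when both
divisions by `critPoly d k` are exact. -/
def geomSumDiv (d l k : ℕ) : ℤ[X] :=
  geomSum₂ d (critPoly d (l + k) /ₘ critPoly d k) (critPoly d l /ₘ critPoly d k)

lemma critPoly_pow_mul_geomSumDiv {d : ℕ} (hd : 2 ≤ d) {l k : ℕ} (hk : k ≠ 0) (hkl : k ∣ l) :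
    critPoly d k ^ (d - 1) * geomSumDiv d l k =
      geomSum₂ d (critPoly d (l + k)) (critPoly d l) := by
  rw [geomSumDiv, ← geomSum₂_mul_mul, critPoly_mul_divByMonic hd hk (hkl.add dvd_rfl),
    critPoly_mul_divByMonic hd hk hkl]

lemma geomSumDiv_monic {d : ℕ} (hd : 2 ≤ d) {l k : ℕ} (hk : k ≠ 0) (hkl : k ∣ l) :
    (geomSumDiv d l k).Monic := by
  refine ((critPoly_monic hd hk).pow (d - 1)).of_mul_monic_left ?_
  rw [critPoly_pow_mul_geomSumDiv hd hk hkl]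
  exact geomSum₂_critPoly_monic hd l hk

lemma FRat_succ_div_FRat_one_eq_prod {d : ℕ} (hd : 2 ≤ d) {l n : ℕ} (hnl : n ∣ l) :
    FRat d (l + 1) n / FRat d 1 n =
      ∏ k ∈ n.divisors, toRF (geomSumDiv d l k) ^ ArithmeticFunction.moebius (n / k) := by
  rw [FRat_succ_eq_prod hd l, ← zero_add 1, FRat_succ_eq_prod hd 0, ← Finset.prod_div_distrib]
  refine Finset.prod_congr rfl fun k hk => ?_
  have hk0 : k ≠ 0 := (Nat.pos_of_mem_divisors hk).ne'
  have hne := toRF_ne_zero ((critPoly_monic hd hk0).pow (d - 1)).ne_zero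
  rw [← div_zpow, zero_add, critPoly_zero, geomSum₂_zero_right (by omega),
    ← critPoly_pow_mul_geomSumDiv hd hk0 ((Nat.dvd_of_mem_divisors hk).trans hnl), toRF_mul,
    mul_div_cancel_left₀ _ hne]

lemma map_geomSumDiv_of_map_critPoly_eq_zero {S : Type*} [CommRing S] (φ : ℤ[X] →+* S) {d : ℕ}
    (hd : 2 ≤ d) {l k : ℕ} (hl : l ≠ 0) (hkl : k ∣ l) (h : φ (critPoly d k) = 0) :
    φ (geomSumDiv d l k) = d := by
  rw [geomSumDiv, map_geomSum₂,
    map_divByMonic_critPoly_eq_one hd (by omega) (hkl.add dvd_rfl) φ h,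
    map_divByMonic_critPoly_eq_one hd hl hkl φ h, geomSum₂_self, one_pow, mul_one]

variable {d n : ℕ} [hd : Fact d.Prime] {G G₀ : ℤ[X]}

lemma IsG0.isUnit_residue_of_map_eq_pow (hG₀ : IsG0 d n G₀)
    (hirr : Irreducible (G₀.map (Int.castRingHom (ZMod d)))) {j : ℕ} (hj : ¬n ∣ j) {s : ℤ[X]}
    {N : ℕ} (hs : s.map (Int.castRingHom (ZMod d)) =
      (critPoly d j).map (Int.castRingHom (ZMod d)) ^ N) :
    IsUnit (residue (Int.castRingHom (ZMod (d ^ 2))) G₀ s) := by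
  have := Fact.mk hirr
  have hne : residue (Int.castRingHom (ZMod d)) G₀ (critPoly d j) ≠ 0 :=
    (hG₀.map_critPoly_eq_zero_iff hd.out.two_le _ (residue_self _ G₀) j).not.2 hj
  refine isUnit_residue_of_residue_ne_zero ZMod.intCast_surjective (ker_intCastRingHom_sq_le d)
    hirr ?_
  rw [residue, RingHom.comp_apply, coe_mapRingHom, hs, map_pow]
  exact pow_ne_zero N hne

lemma IsG0.isUnit_residue_critPoly (hG₀ : IsG0 d n G₀)
    (hirr : Irreducible (G₀.map (Int.castRingHom (ZMod d)))) {j : ℕ} (hj : ¬n ∣ j) :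
    IsUnit (residue (Int.castRingHom (ZMod (d ^ 2))) G₀ (critPoly d j)) :=
  hG₀.isUnit_residue_of_map_eq_pow hirr hj (pow_one _).symm

lemma IsG0.residue_critPoly_eq_zero (hG₀ : IsG0 d n G₀) (hn : n ≠ 0)
    (hirr : Irreducible (G₀.map (Int.castRingHom (ZMod d)))) :
    residue (Int.castRingHom (ZMod (d ^ 2))) G₀ (critPoly d n) = 0 := by
  have hassoc := associated_map_of_eq_prod_zpow_moebius
    (residue (Int.castRingHom (ZMod (d ^ 2))) G₀) hn (fun k hk => ?_) hG₀
  · rwa [residue_self, Associated.comm, associated_zero_iff_eq_zero] at hassoc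
  · exact hG₀.isUnit_residue_critPoly hirr (not_dvd_of_mem_properDivisors hk)

lemma map_geomSum₂_critPoly (l k : ℕ) :
    (geomSum₂ d (critPoly d (l + k)) (critPoly d l)).map (Int.castRingHom (ZMod d)) =
      (critPoly d k).map (Int.castRingHom (ZMod d)) ^ (d ^ l * (d - 1)) := by
  have h := map_critPoly_add_sub (mapRingHom (Int.castRingHom (ZMod d))) d l k
  rw [← coe_mapRingHom, map_geomSum₂, geomSum₂_eq_sub_pow, h, pow_mul]

lemma map_geomSumDiv {l k : ℕ} (hk : k ≠ 0) (hkl : k ∣ l) :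
    (geomSumDiv d l k).map (Int.castRingHom (ZMod d)) =
      (critPoly d k).map (Int.castRingHom (ZMod d)) ^ ((d ^ l - 1) * (d - 1)) := by
  have hmonic := ((critPoly_monic hd.out.two_le hk).map (Int.castRingHom (ZMod d))).pow (d - 1)
  have hexp : d - 1 + (d ^ l - 1) * (d - 1) = d ^ l * (d - 1) := by
    rw [add_comm, ← Nat.succ_mul, Nat.succ_eq_add_one, Nat.sub_add_cancel (Nat.pow_pos hd.out.pos)]
  apply mul_left_cancel₀ hmonic.ne_zero
  rw [← Polynomial.map_pow, ← Polynomial.map_mul, critPoly_pow_mul_geomSumDiv hd.out.two_le hk hkl,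
    map_geomSum₂_critPoly, Polynomial.map_pow, ← pow_add, hexp]

lemma IsG0.irreducible_of_eq_prod_zpow_moebius (hG₀ : IsG0 d n G₀) (hn : n ≠ 0)
    (hirr : Irreducible (G₀.map (Int.castRingHom (ZMod d)))) {u : ℕ → ℤ[X]} {N : ℕ} (hN : N ≠ 0)
    (hu : ∀ k ∈ n.divisors, (u k).Monic)
    (huN : ∀ k ∈ n.divisors, (u k).map (Int.castRingHom (ZMod d)) =
      (critPoly d k).map (Int.castRingHom (ZMod d)) ^ N)
    (hun : Associated (residue (Int.castRingHom (ZMod (d ^ 2))) G₀ (u n)) d)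
    (hG : toRF G = ∏ k ∈ n.divisors, toRF (u k) ^ ArithmeticFunction.moebius (n / k)) :
    Irreducible (G.map (Int.castRingHom ℚ)) := by
  have hRF := IsFractionRing.injective ℤ[X] RF
  have hG_monic : G.Monic := monic_of_eq_prod_zpow hRF hu hG
  have hG₀_monic : G₀.Monic := hG₀.monic hd.out.two_le
  have hpow : G.map (Int.castRingHom (ZMod d)) = G₀.map (Int.castRingHom (ZMod d)) ^ N := by
    refine map_eq_pow_of_eq_prod_zpow (mapRingHom (Int.castRingHom (ZMod d))) hRF ?_ huN hG hG₀
    intro k hk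
    exact ((critPoly_monic hd.out.two_le (Nat.pos_of_mem_divisors hk).ne').map _).ne_zero
  have hassoc := associated_map_of_eq_prod_zpow_moebius (residue _ G₀) hn
    (fun k hk => hG₀.isUnit_residue_of_map_eq_pow hirr (not_dvd_of_mem_properDivisors hk)
      (huN k (Nat.properDivisors_subset_divisors hk))) hG
  have hdeg : G₀.natDegree ≠ 0 :=
    hG₀_monic.natDegree_map (Int.castRingHom (ZMod d)) ▸ hirr.natDegree_pos.ne'
  refine (hG_monic.irreducible_iff_irreducible_map_fraction_map (K := ℚ)).1 ?_
  refine irreducible_of_residue_ne_zero (ker_intCastRingHom_sq_le d) hG_monic hG₀_monic hirr hN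
    hpow ?_
  exact (hassoc.trans hun).ne_zero_iff.2 (residue_natCast_ne_zero hd.out.one_lt hG₀_monic hdeg)

lemma IsG0.irreducible_of_eq_FRat (hG₀ : IsG0 d n G₀) (hn : n ≠ 0)
    (hirr : Irreducible (G₀.map (Int.castRingHom (ZMod d)))) {l : ℕ} (hnl : ¬n ∣ l)
    (hG : toRF G = FRat d (l + 1) n) : Irreducible (G.map (Int.castRingHom ℚ)) := by
  have hd2 := hd.out.two_le
  refine hG₀.irreducible_of_eq_prod_zpow_moebius hn hirr
    (mul_ne_zero (pow_ne_zero l hd.out.ne_zero) (by omega))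
    (fun k hk => geomSum₂_critPoly_monic hd2 l (Nat.pos_of_mem_divisors hk).ne')
    (fun k _ => map_geomSum₂_critPoly l k) ?_ (hG.trans (FRat_succ_eq_prod hd2 l n))
  rw [map_geomSum₂, map_critPoly_add_of_eq_zero _ (hG₀.residue_critPoly_eq_zero hn hirr),
    geomSum₂_self]
  exact associated_mul_unit_left _ _ ((hG₀.isUnit_residue_critPoly hirr hnl).pow _)

lemma IsG0.irreducible_of_eq_FRat_div (hG₀ : IsG0 d n G₀) (hn : n ≠ 0)
    (hirr : Irreducible (G₀.map (Int.castRingHom (ZMod d)))) {l : ℕ} (hl : l ≠ 0) (hnl : n ∣ l)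
    (hG : toRF G = FRat d (l + 1) n / FRat d 1 n) : Irreducible (G.map (Int.castRingHom ℚ)) := by
  have hd2 := hd.out.two_le
  have hdl : 1 < d ^ l := Nat.one_lt_pow hl hd2
  refine hG₀.irreducible_of_eq_prod_zpow_moebius hn hirr (mul_ne_zero (by omega) (by omega))
    (fun k hk => geomSumDiv_monic hd2 (Nat.pos_of_mem_divisors hk).ne'
      ((Nat.dvd_of_mem_divisors hk).trans hnl))
    (fun k hk => map_geomSumDiv (Nat.pos_of_mem_divisors hk).ne'
      ((Nat.dvd_of_mem_divisors hk).trans hnl))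
    ?_ (hG.trans (FRat_succ_div_FRat_one_eq_prod hd2 hnl))
  rw [map_geomSumDiv_of_map_critPoly_eq_zero _ hd2 hl hnl (hG₀.residue_critPoly_eq_zero hn hirr)]

end Misiurewicz

/-- For a prime `d` and `m ≥ 2`, `n ≥ 1`, if the reduction of `G_{d,0,n}`
modulo `d` is irreducible over `𝔽_d`, then `G_{d,m,n}` is irreducible over `ℚ`. -/
theorem misiurewicz_irreducible_of_reduction_irreducible (d m n : ℕ) [hd : Fact d.Prime]
    (hm : 2 ≤ m) (hn : 1 ≤ n)
    (G G0 : Polynomial ℤ) (hG : IsMisiurewicz d m n G) (hG0 : IsG0 d n G0)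
    (hirr : Irreducible (G0.map (Int.castRingHom (ZMod d)))) :
    Irreducible (G.map (Int.castRingHom ℚ)) := by
  obtain ⟨l, rfl⟩ : ∃ l, m = l + 1 := ⟨m - 1, by omega⟩
  rw [IsMisiurewicz, GRat, add_tsub_cancel_right] at hG
  split_ifs at hG with hnl
  · exact hG0.irreducible_of_eq_FRat_div (by omega) hirr (by omega) hnl hG
  · exact hG0.irreducible_of_eq_FRat (by omega) hirr hnl hG
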